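/- Let μ > 0 and let c be any real constant. Define on the unit square Ω = (0,1)×(0,1) the velocity field u = (u_x, u_y) with u_x(x,y) = −x·sin(xy) and u_y(x,y) = y·sin(xy), and the pressure P(x,y) = cos(xy) − c. Then for every (x,y) ∈ Ω the momentum equations −μ Δu_x + ∂P/∂x = g_x and −μ Δu_y + ∂P/∂y = g_y hold, where g_x(x,y) = −μ[sin(xy)·x·(x²+y²) − 2cos(xy)·y] − sin(xy)·y and g_y(x,y) = μ[sin(xy)·y·(x²+y²) − 2cos(xy)·x] − sin(xy)·x. -/

import Mathlib

open Real

/-- Partial derivative in the first (x) variable. -/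
noncomputable def pdx (f : ℝ → ℝ → ℝ) (x y : ℝ) : ℝ := deriv (fun s => f s y) x

/-- Partial derivative in the second (y) variable. -/
noncomputable def pdy (f : ℝ → ℝ → ℝ) (x y : ℝ) : ℝ := deriv (fun t => f x t) y

/-- Componentwise planar Laplacian ∂²/∂x² + ∂²/∂y². -/
noncomputable def lapl (f : ℝ → ℝ → ℝ) (x y : ℝ) : ℝ :=
  deriv (deriv (fun s => f s y)) x + deriv (deriv (fun t => f x t)) y

theorem hasDerivAt_sin_mul_const (b x : ℝ) :
    HasDerivAt (fun s => Real.sin (s * b)) (Real.cos (x * b) * b) x := by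
  simpa using ((hasDerivAt_id x).mul_const b).sin

theorem hasDerivAt_cos_mul_const (b x : ℝ) :
    HasDerivAt (fun s => Real.cos (s * b)) (-Real.sin (x * b) * b) x := by
  simpa using ((hasDerivAt_id x).mul_const b).cos

theorem deriv_deriv_const_mul_sin (a b x : ℝ) :
    deriv (deriv fun s => a * Real.sin (s * b)) x = -a * b ^ 2 * Real.sin (x * b) := by
  have h : (deriv fun s => a * Real.sin (s * b)) = fun s => a * (Real.cos (s * b) * b) :=
    funext fun s => ((hasDerivAt_sin_mul_const b s).const_mul a).deriv
  rw [h, (((hasDerivAt_cos_mul_const b x).mul_const b).const_mul a).deriv]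
  ring

theorem deriv_deriv_id_mul_sin (b x : ℝ) :
    deriv (deriv fun s => s * Real.sin (s * b)) x =
      2 * b * Real.cos (x * b) - b ^ 2 * x * Real.sin (x * b) := by
  have h : (deriv fun s => s * Real.sin (s * b)) =
      fun s => 1 * Real.sin (s * b) + s * (Real.cos (s * b) * b) :=
    funext fun s => ((hasDerivAt_id' s).fun_mul (hasDerivAt_sin_mul_const b s)).deriv
  rw [h, (((hasDerivAt_sin_mul_const b x).const_mul 1).fun_add ((hasDerivAt_id' x).fun_mul
    ((hasDerivAt_cos_mul_const b x).mul_const b))).deriv]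
  ring

/-- The Laplacian of `y sin (xy)`. -/
theorem lapl_snd_mul_sin (x y : ℝ) :
    lapl (fun x y => y * Real.sin (x * y)) x y =
      2 * x * Real.cos (x * y) - y * (x ^ 2 + y ^ 2) * Real.sin (x * y) := by
  have h := deriv_deriv_id_mul_sin x y
  simp only [mul_comm _ x] at h
  simp only [lapl, deriv_deriv_const_mul_sin, h]
  ring_nf

/-- The Laplacian of `-x sin (xy)`. -/
theorem lapl_neg_fst_mul_sin (x y : ℝ) :
    lapl (fun x y => -x * Real.sin (x * y)) x y =
      x * (x ^ 2 + y ^ 2) * Real.sin (x * y) - 2 * y * Real.cos (x * y) := by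
  have hx : deriv (deriv fun s => -s * Real.sin (s * y)) x =
      -(2 * y * Real.cos (x * y) - y ^ 2 * x * Real.sin (x * y)) := by
    simp only [neg_mul, deriv.fun_neg', deriv.fun_neg, deriv_deriv_id_mul_sin]
  have hy : deriv (deriv fun t => -x * Real.sin (x * t)) y = x * x ^ 2 * Real.sin (x * y) := by
    simpa only [mul_comm _ x, neg_neg] using deriv_deriv_const_mul_sin (-x) x y
  simp only [lapl, hx, hy]
  ring

theorem pdx_cos_mul_sub_const (c x y : ℝ) :
    pdx (fun x y => Real.cos (x * y) - c) x y = -Real.sin (x * y) * y :=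
  ((hasDerivAt_cos_mul_const y x).sub_const c).deriv

theorem pdy_cos_mul_sub_const (c x y : ℝ) :
    pdy (fun x y => Real.cos (x * y) - c) x y = -Real.sin (x * y) * x := by
  simpa only [pdx, pdy, mul_comm y, mul_comm _ x] using pdx_cos_mul_sub_const c y x

theorem testProblem6_momentum (μ : ℝ) (hμ : 0 < μ) (c : ℝ) :
    ∀ x ∈ Set.Ioo (0:ℝ) 1, ∀ y ∈ Set.Ioo (0:ℝ) 1,
      -μ * lapl (fun x y => -x*Real.sin (x*y)) x y
          + pdx (fun x y => Real.cos (x*y) - c) x y = -μ*(Real.sin (x*y)*x*(x^2+y^2) - 2*Real.cos (x*y)*y) - Real.sin (x*y)*y ∧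
      -μ * lapl (fun x y => y*Real.sin (x*y)) x y
          + pdy (fun x y => Real.cos (x*y) - c) x y = μ*(Real.sin (x*y)*y*(x^2+y^2) - 2*Real.cos (x*y)*x) - Real.sin (x*y)*x := by
  intro x _ y _
  rw [lapl_neg_fst_mul_sin, lapl_snd_mul_sin, pdx_cos_mul_sub_const, pdy_cos_mul_sub_const]
  constructor <;> ring
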